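/- arXiv:1805.08346 — 3 statements merged into one kernel-verified Lean document; each statement's English description precedes it below -/
import Mathlib

section
/- Let (X,π) and (Y,σ) be semidynamical systems on metric spaces, x ∈ X, y ∈ Y, and let A ⊆ X be positively invariant with L⁺(x) ∩ A ≠ ∅. If y is comparable with x with respect to the set L⁺(x) ∩ A, then there exists a continuous map h : L⁺(x) ∩ A → L⁺(y) such that 𝓛_{x,q}^∞ ⊆ 𝓛_{y,h(q)}^∞ for every q ∈ L⁺(x) ∩ A, and h(π(q,t)) = σ(h(q),t) for every q ∈ L⁺(x) ∩ A and every t ≥ 0. -/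
/-!
For `q` in `limitSet π x ∩ A`, the sequences `t → ∞` with `π x (t n) → q` are exactly the
sequences tending to the filter `timeFilter π x q`. Any two of them can be interleaved into a
third one, so comparability forces `σ y (t n)` to have the same limit for all of them; hence `σ y`
converges along the whole (countably generated) filter, and `h q` is its limit.
Continuity is then a regularity argument: on a set of the form `{t ≥ T, π x t ∈ U}` with `U` an open
neighbourhood of `q`, `σ y` stays in a given closed neighbourhood of `h q`, and this set belongs to
the filter of every `q' ∈ U`. Equivariance follows by shifting an approximating sequence by `s`.
-/

open Filter Topology
open scoped NNReal

/-- `π` is a semidynamical system on the metric space `Z`. -/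
def IsSDS {Z : Type*} [MetricSpace Z] (π : Z → ℝ≥0 → Z) : Prop :=
  Continuous (fun p : Z × ℝ≥0 => π p.1 p.2) ∧ (∀ z, π z 0 = z) ∧
    ∀ z t s, π (π z t) s = π z (t + s)

/-- The positive limit set of a point `x` under `π`. -/
def limitSet {Z : Type*} [MetricSpace Z] (π : Z → ℝ≥0 → Z) (x : Z) : Set Z :=
  {p | ∃ t : ℕ → ℝ≥0, Tendsto t atTop atTop ∧
    Tendsto (fun n => π x (t n)) atTop (𝓝 p)}

/-- The filter of times `t → ∞` at which `π x t` approaches `q`. -/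
def timeFilter {Z : Type*} [MetricSpace Z] (π : Z → ℝ≥0 → Z) (x q : Z) : Filter ℝ≥0 :=
  atTop ⊓ comap (π x) (𝓝 q)

lemma tendsto_timeFilter {Z : Type*} [MetricSpace Z] {π : Z → ℝ≥0 → Z} {x q : Z}
    {t : ℕ → ℝ≥0} : Tendsto t atTop (timeFilter π x q) ↔
      Tendsto t atTop atTop ∧ Tendsto (fun n => π x (t n)) atTop (𝓝 q) := by
  rw [timeFilter, tendsto_inf, tendsto_comap_iff]
  rfl

lemma tendsto_interleave {α : Type*} {F : Filter α} {a b : ℕ → α}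
    (ha : Tendsto a atTop F) (hb : Tendsto b atTop F) :
    Tendsto (fun n => if Even n then a (n / 2) else b (n / 2)) atTop F := by
  have hdiv : Tendsto (fun n : ℕ => n / 2) atTop atTop :=
    Nat.tendsto_div_const_atTop two_ne_zero
  exact (ha.comp hdiv).if' (hb.comp hdiv)

/-- If `f` converges along every sequence tending to `F`, then all these limits agree (by
interleaving), so `f` converges along `F`. -/
lemma exists_tendsto_of_seq {α Y : Type*} [MetricSpace Y] {F : Filter α}
    [F.IsCountablyGenerated] [F.NeBot] {f : α → Y}
    (hf : ∀ t : ℕ → α, Tendsto t atTop F → ∃ p, Tendsto (fun n => f (t n)) atTop (𝓝 p)) :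
    ∃ p, Tendsto f F (𝓝 p) := by
  obtain ⟨a, ha⟩ := exists_seq_tendsto F
  obtain ⟨p, hp⟩ := hf a ha
  refine ⟨p, tendsto_of_seq_tendsto fun b hb => ?_⟩
  obtain ⟨r, hr⟩ := hf _ (tendsto_interleave ha hb)
  have heven : Tendsto (fun n : ℕ => 2 * n) atTop atTop :=
    tendsto_id.const_mul_atTop' two_pos
  have hodd : Tendsto (fun n : ℕ => 2 * n + 1) atTop atTop :=
    tendsto_atTop_mono (fun n => Nat.le_succ _) heven
  have hra : Tendsto (fun n => f (a n)) atTop (𝓝 r) := by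
    refine (hr.comp heven).congr fun n => ?_
    simp
  have hrb : Tendsto (fun n => f (b n)) atTop (𝓝 r) := by
    refine (hr.comp hodd).congr fun n => ?_
    have hdiv : (2 * n + 1) / 2 = n := by omega
    simp [hdiv]
  rw [tendsto_nhds_unique hp hra]
  exact hrb

theorem stmt_2 {X Y : Type*} [MetricSpace X] [MetricSpace Y]
    (π : X → ℝ≥0 → X) (σ : Y → ℝ≥0 → Y) (hπ : IsSDS π) (hσ : IsSDS σ)
    (x : X) (y : Y) (A : Set X)
    (hA : ∀ a ∈ A, ∀ t : ℝ≥0, π a t ∈ A)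
    (hne : (limitSet π x ∩ A).Nonempty)
    (hcomp : ∀ t : ℕ → ℝ≥0, Tendsto t atTop atTop →
      (∃ p ∈ limitSet π x ∩ A, Tendsto (fun n => π x (t n)) atTop (𝓝 p)) →
      ∃ q : Y, Tendsto (fun n => σ y (t n)) atTop (𝓝 q)) :
    ∃ h : X → Y, ContinuousOn h (limitSet π x ∩ A) ∧
      Set.MapsTo h (limitSet π x ∩ A) (limitSet σ y) ∧
      (∀ q ∈ limitSet π x ∩ A, ∀ t : ℕ → ℝ≥0, Tendsto t atTop atTop →
        Tendsto (fun n => π x (t n)) atTop (𝓝 q) →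
        Tendsto (fun n => σ y (t n)) atTop (𝓝 (h q))) ∧
      (∀ q ∈ limitSet π x ∩ A, ∀ s : ℝ≥0, h (π q s) = σ (h q) s) := by
  obtain ⟨hπc, -, hπa⟩ := hπ
  obtain ⟨hσc, -, hσa⟩ := hσ
  have hbot : ∀ q ∈ limitSet π x, (timeFilter π x q).NeBot := by
    rintro q ⟨t, ht⟩
    exact (tendsto_timeFilter.2 ht).neBot
  have hlim : ∀ q ∈ limitSet π x ∩ A, ∃ p, Tendsto (σ y) (timeFilter π x q) (𝓝 p) := by
    intro q hq
    have := hbot q hq.1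
    have : (timeFilter π x q).IsCountablyGenerated := by
      unfold timeFilter
      infer_instance
    refine exists_tendsto_of_seq fun t ht => ?_
    rw [tendsto_timeFilter] at ht
    exact hcomp t ht.1 ⟨q, hq, ht.2⟩
  have : Nonempty Y := ⟨y⟩
  choose! h hh using hlim
  have hseq : ∀ q ∈ limitSet π x ∩ A, ∀ t : ℕ → ℝ≥0, Tendsto t atTop atTop →
      Tendsto (fun n => π x (t n)) atTop (𝓝 q) →
      Tendsto (fun n => σ y (t n)) atTop (𝓝 (h q)) := fun q hq t ht htq =>
    (hh q hq).comp (tendsto_timeFilter.2 ⟨ht, htq⟩)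
  refine ⟨h, ?_, ?_, hseq, ?_⟩
  · intro q hq
    refine (closed_nhds_basis (h q)).tendsto_right_iff.2 ?_
    rintro V ⟨hV, hVc⟩
    have hmem : ∀ᶠ t in timeFilter π x q, σ y t ∈ V := hh q hq hV
    obtain ⟨S, hS, W, hW, hSW⟩ := mem_inf_iff_superset.1 hmem
    obtain ⟨U, hU, hUW⟩ := hW
    obtain ⟨O, hOU, hO, hqO⟩ := mem_nhds_iff.1 hU
    filter_upwards [self_mem_nhdsWithin, mem_nhdsWithin_of_mem_nhds (hO.mem_nhds hqO)]
      with q' hq' hq'O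
    have := hbot q' hq'.1
    refine hVc.mem_of_tendsto (hh q' hq') ?_
    refine mem_inf_iff_superset.2 ⟨S, hS, W, ⟨O, hO.mem_nhds hq'O, ?_⟩, hSW⟩
    exact (Set.preimage_mono hOU).trans hUW
  · rintro q hq
    obtain ⟨t, ht, htq⟩ := hq.1
    exact ⟨t, ht, hseq q hq t ht htq⟩
  · intro q hq s
    obtain ⟨t, ht, htq⟩ := hq.1
    have hts : Tendsto (fun n => t n + s) atTop atTop :=
      tendsto_atTop_mono (fun n => le_self_add) ht
    have hπs : Tendsto (fun n => π x (t n + s)) atTop (𝓝 (π q s)) := by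
      have hc : Continuous fun z => π z s := hπc.comp (Continuous.prodMk_left s)
      simpa only [Function.comp_def, hπa] using (hc.tendsto q).comp htq
    have hσs : Tendsto (fun n => σ y (t n + s)) atTop (𝓝 (σ (h q) s)) := by
      have hc : Continuous fun z => σ z s := hσc.comp (Continuous.prodMk_left s)
      simpa only [Function.comp_def, hσa] using (hc.tendsto (h q)).comp (hseq q hq t ht htq)
    exact tendsto_nhds_unique (hseq _ ⟨⟨_, hts, hπs⟩, hA q hq.2 s⟩ _ hts hπs) hσs
end

section
/- Let (X,π) and (Y,σ) be semidynamical systems on metric spaces, x ∈ X and y ∈ Y with L⁺(x) ≠ ∅. If 𝓛ₓ^∞ = 𝓛_y^∞ (as collections of sequences), then there exists a homeomorphism h : L⁺(x) → L⁺(y) such that h(π(q,t)) = σ(h(q),t) for every q ∈ L⁺(x) and every t ≥ 0; in particular the limit sets L⁺(x) and L⁺(y) are topologically conjugate. -/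
/-!
For an orbit map `f : ℝ≥0 → Z` and a point `p`, let `approach f p` be the filter of times that
tend to infinity while `f` tends to `p`. It is countably generated, and it is nontrivial exactly
when `p` is a limit point of the orbit. If every sequence of times `t n → ∞` along which `f`
converges is one along which `g` converges, then interleaving two sequences shows that the limit of
`g` depends only on the limit of `f`, so `g` has a limit `h p` along `approach f p`
(`exists_limit_map`). Such a map `h` is continuous on the limit set, as every extension by
continuity into a regular space is (`continuousOn_limit_map`). Applying this to the two orbits in
both orders gives `h` and its inverse; the remaining identities follow from uniqueness of limits,
the intertwining one after translating times by `s`.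
-/

open Filter Topology
open scoped NNReal

/-- The filter of times tending to infinity along which `f` tends to `p`. -/
def approach {Z : Type*} [MetricSpace Z] (f : ℝ≥0 → Z) (p : Z) : Filter ℝ≥0 :=
  comap f (𝓝 p) ⊓ atTop

lemma tendsto_approach_iff {α Z : Type*} [MetricSpace Z] {f : ℝ≥0 → Z} {p : Z}
    {l : Filter α} {t : α → ℝ≥0} :
    Tendsto t l (approach f p) ↔ Tendsto (fun a => f (t a)) l (𝓝 p) ∧ Tendsto t l atTop := by
  rw [approach, tendsto_inf, tendsto_comap_iff]
  rfl

lemma tendsto_approach {Z : Type*} [MetricSpace Z] (f : ℝ≥0 → Z) (p : Z) :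
    Tendsto f (approach f p) (𝓝 p) :=
  tendsto_comap.mono_left inf_le_left

instance {Z : Type*} [MetricSpace Z] (f : ℝ≥0 → Z) (p : Z) :
    (approach f p).IsCountablyGenerated := by
  unfold approach; infer_instance

lemma mem_limitSet_iff {Z : Type*} [MetricSpace Z] {π : Z → ℝ≥0 → Z} {x p : Z} :
    p ∈ limitSet π x ↔ (approach (π x) p).NeBot := by
  constructor
  · rintro ⟨t, ht, hp⟩
    exact (tendsto_approach_iff.2 ⟨hp, ht⟩).neBot
  · intro _
    obtain ⟨t, ht⟩ := exists_seq_tendsto (approach (π x) p)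
    exact ⟨t, (tendsto_approach_iff.1 ht).2, (tendsto_approach_iff.1 ht).1⟩

/-- If `g` converges along every sequence of times tending to infinity along which `f` converges,
then the limit of `g` is a function of the limit of `f`. For `p` outside the limit set of `f` the
filter `approach f p` is trivial, so the value `h p` is unconstrained. -/
lemma exists_limit_map {X Y : Type*} [MetricSpace X] [MetricSpace Y]
    (f : ℝ≥0 → X) (g : ℝ≥0 → Y)
    (H : ∀ t : ℕ → ℝ≥0, Tendsto t atTop atTop →
      (∃ p, Tendsto (fun n => f (t n)) atTop (𝓝 p)) →
      ∃ q, Tendsto (fun n => g (t n)) atTop (𝓝 q)) :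
    ∃ h : X → Y, ∀ p, Tendsto g (approach f p) (𝓝 (h p)) := by
  suffices h : ∀ p, ∃ q, Tendsto g (approach f p) (𝓝 q) by
    choose h hh using h
    exact ⟨h, hh⟩
  intro p
  have H' : ∀ t : ℕ → ℝ≥0, Tendsto t atTop (approach f p) →
      ∃ q, Tendsto (fun n => g (t n)) atTop (𝓝 q) := fun t ht =>
    H t (tendsto_approach_iff.1 ht).2 ⟨p, (tendsto_approach_iff.1 ht).1⟩
  rcases (approach f p).eq_or_neBot with hbot | _
  · exact ⟨g 0, by simp [hbot]⟩
  obtain ⟨t, ht⟩ := exists_seq_tendsto (approach f p)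
  obtain ⟨q, hq⟩ := H' t ht
  refine ⟨q, tendsto_of_seq_tendsto fun u hu => ?_⟩
  -- Interleave `t` (even indices) and `u` (odd indices).
  let w : ℕ → ℝ≥0 := fun n => if Even n then t (n / 2) else u (n / 2)
  have hdiv : Tendsto (fun n : ℕ => n / 2) atTop atTop :=
    Nat.tendsto_div_const_atTop two_ne_zero
  have hw : Tendsto w atTop (approach f p) :=
    Tendsto.if' (ht.comp hdiv) (hu.comp hdiv)
  obtain ⟨r, hr⟩ := H' w hw
  have h0 : Tendsto (fun n : ℕ => 2 * n) atTop atTop :=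
    tendsto_atTop_mono (fun n => by simp only [id]; omega) tendsto_id
  have h1 : Tendsto (fun n : ℕ => 2 * n + 1) atTop atTop :=
    tendsto_atTop_mono (fun n => by simp only [id]; omega) tendsto_id
  have e0 : ∀ n, w (2 * n) = t n := fun n => by simp [w]
  have e1 : ∀ n, w (2 * n + 1) = u n := fun n => by
    have : (2 * n + 1) / 2 = n := by omega
    simp [w, this]
  have r0 := hr.comp h0
  have r1 := hr.comp h1
  simp only [Function.comp_def, e0, e1] at r0 r1
  rw [tendsto_nhds_unique hq r0]
  exact r1

lemma continuousOn_limit_map {X Y : Type*} [MetricSpace X] [MetricSpace Y]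
    {f : ℝ≥0 → X} {g : ℝ≥0 → Y} {h : X → Y}
    (hh : ∀ p, Tendsto g (approach f p) (𝓝 (h p))) :
    ContinuousOn h {p | (approach f p).NeBot} := by
  intro p _
  refine (closed_nhds_basis (h p)).tendsto_right_iff.2 ?_
  rintro V ⟨hV, hVc⟩
  obtain ⟨A, hA, B, hB, hAB⟩ := mem_inf_iff_superset.1 (hh p hV)
  obtain ⟨U, hU, hUA⟩ := mem_comap.1 hA
  filter_upwards [mem_nhdsWithin_of_mem_nhds (eventually_mem_nhds_iff.2 hU),
    self_mem_nhdsWithin] with p' hp' hne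
  have : (approach f p').NeBot := hne
  refine hVc.mem_of_tendsto (hh p') ?_
  exact mem_inf_iff_superset.2
    ⟨A, mem_of_superset (preimage_mem_comap hp') hUA, B, hB, hAB⟩

/-- Times along which `f` tends to `p` are times along which `g` tends to `h p`; in particular `h`
maps limit points of `f` to limit points of `g`. -/
lemma approach_le {X Y : Type*} [MetricSpace X] [MetricSpace Y]
    {f : ℝ≥0 → X} {g : ℝ≥0 → Y} {h : X → Y}
    (hh : ∀ p, Tendsto g (approach f p) (𝓝 (h p))) (p : X) :
    approach f p ≤ approach g (h p) :=
  le_inf (tendsto_iff_comap.1 (hh p)) inf_le_right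

/-- if `𝓛ₓ^∞ = 𝓛_y^∞` then the limit sets `L⁺(x)` and `L⁺(y)` are
topologically conjugate: there is a homeomorphism `h` between them (given together with
its continuous inverse `g`) intertwining the flows. -/
theorem stmt_4 {X Y : Type*} [MetricSpace X] [MetricSpace Y]
    (π : X → ℝ≥0 → X) (σ : Y → ℝ≥0 → Y) (hπ : IsSDS π) (hσ : IsSDS σ)
    (x : X) (y : Y)
    (hne : (limitSet π x).Nonempty)
    (heq : ∀ t : ℕ → ℝ≥0, Tendsto t atTop atTop →
      ((∃ p : X, Tendsto (fun n => π x (t n)) atTop (𝓝 p)) ↔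
       (∃ q : Y, Tendsto (fun n => σ y (t n)) atTop (𝓝 q)))) :
    ∃ h : X → Y, ∃ g : Y → X,
      ContinuousOn h (limitSet π x) ∧ ContinuousOn g (limitSet σ y) ∧
      Set.MapsTo h (limitSet π x) (limitSet σ y) ∧
      Set.MapsTo g (limitSet σ y) (limitSet π x) ∧
      (∀ q ∈ limitSet π x, g (h q) = q) ∧
      (∀ p ∈ limitSet σ y, h (g p) = p) ∧
      (∀ q ∈ limitSet π x, ∀ s : ℝ≥0, h (π q s) = σ (h q) s) := by
  obtain ⟨h, hh⟩ := exists_limit_map (π x) (σ y) fun t ht => (heq t ht).1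
  obtain ⟨g, hg⟩ := exists_limit_map (σ y) (π x) fun t ht => (heq t ht).2
  have eX : limitSet π x = {p | (approach (π x) p).NeBot} := Set.ext fun _ => mem_limitSet_iff
  have eY : limitSet σ y = {p | (approach (σ y) p).NeBot} := Set.ext fun _ => mem_limitSet_iff
  rw [eX, eY]
  refine ⟨h, g, continuousOn_limit_map hh, continuousOn_limit_map hg,
    fun p hp => NeBot.mono hp (approach_le hh p), fun p hp => NeBot.mono hp (approach_le hg p),
    fun p hp => ?_, fun p hp => ?_, fun p hp s => ?_⟩
  · have : (approach (π x) p).NeBot := hp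
    exact tendsto_nhds_unique ((hg (h p)).mono_left (approach_le hh p)) (tendsto_approach _ p)
  · have : (approach (σ y) p).NeBot := hp
    exact tendsto_nhds_unique ((hh (g p)).mono_left (approach_le hg p)) (tendsto_approach _ p)
  · have : (approach (π x) p).NeBot := hp
    have cπ : Continuous fun z => π z s := hπ.1.comp (by fun_prop : Continuous fun z => (z, s))
    have cσ : Continuous fun z => σ z s := hσ.1.comp (by fun_prop : Continuous fun z => (z, s))
    have hshift : Tendsto (fun t => t + s) (approach (π x) p) (approach (π x) (π p s)) := by
      refine tendsto_approach_iff.2 ⟨?_, ?_⟩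
      · simpa only [Function.comp_def, hπ.2.2] using
          (cπ.tendsto p).comp (tendsto_approach (π x) p)
      · exact tendsto_atTop_mono (fun t => le_self_add) (tendsto_id.mono_left inf_le_right)
    have h1 := (hh (π p s)).comp hshift
    have h2 := (cσ.tendsto (h p)).comp (hh p)
    simp only [Function.comp_def, hσ.2.2] at h1 h2
    exact tendsto_nhds_unique h1 h2
end

section
/- Let (X,π) and (Y,σ) be semidynamical systems on metric spaces, let x ∈ X be asymptotically almost periodic and let y ∈ Y be comparable in limit with x. Then there exists a continuous map h : L⁺(x) → L⁺(y) such that: (a) 𝓛_{x,q}^∞ ⊆ 𝓛_{y,h(q)}^∞ for every q ∈ L⁺(x); (b) h(π(q,t)) = σ(h(q),t) for every q ∈ L⁺(x) and every t ≥ 0; and (c) for every q̃ ∈ P_x, every time reparametrization g with ρ_X(π(x,t), π(q̃,g(t))) → 0 as t → +∞, and every sequence (tₙ) ∈ 𝓛ₓ^∞, one has ρ_Y(σ(y,tₙ), σ(h(q̃), g(tₙ))) → 0 as n → +∞. -/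
/-!
Comparability in limit forces the limit of `σ y (t n)` to depend only on the limit `q` of
`π x (t n)`: two sequences with the same limit `q` can be interleaved into a third one, along which
`σ y` still converges (`exists_limit_value`). This common value is `h q`.

Equivalently, `σ y` tends to `h q` along the filter `atTop ⊓ comap (π x) (𝓝 q)`. Thus near `q` and
for large times `σ y` stays close to `h q`, which bounds `h` at the limit points near `q` and gives
continuity. Equivariance follows by shifting a sequence by `s`. For the tracking property, if
`π x (t n) → p` then `π q' (g (t n)) → p` inside the positively invariant set `L⁺(x)`, so
`σ (h q') (g (t n)) = h (π q' (g (t n))) → h p`, which is also the limit of `σ y (t n)`.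
-/


open Filter Topology
open scoped NNReal

/-- `x` is an almost periodic point of the semidynamical system `π`. -/
def AlmostPer {Z : Type*} [MetricSpace Z] (π : Z → ℝ≥0 → Z) (x : Z) : Prop :=
  ∀ ε : ℝ, 0 < ε → ∃ T : ℝ≥0, 0 < T ∧ ∀ α : ℝ≥0, ∃ τ : ℝ≥0,
    α ≤ τ ∧ τ ≤ α + T ∧ 0 < τ ∧ ∀ t : ℝ≥0, dist (π x (t + τ)) (π x t) < ε

/-- The set `P_x`: points `z ∈ L⁺(x) ∩ L⁺(z)` whose motion tracks that of `x` up to a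
time reparametrization (a homeomorphism `g` of `[0,∞)` with `g 0 = 0`). -/
def Pset {Z : Type*} [MetricSpace Z] (π : Z → ℝ≥0 → Z) (x : Z) : Set Z :=
  {z | z ∈ limitSet π x ∧ z ∈ limitSet π z ∧
    ∃ g : ℝ≥0 ≃ₜ ℝ≥0, g 0 = 0 ∧
      Tendsto (fun t : ℝ≥0 => dist (π x t) (π z (g t))) atTop (𝓝 0)}

/-- `x` is asymptotically almost periodic: its motion tracks that of an almost periodic
point up to a time reparametrization. -/
def AsympAP {Z : Type*} [MetricSpace Z] (π : Z → ℝ≥0 → Z) (x : Z) : Prop :=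
  ∃ p : Z, AlmostPer π p ∧ ∃ g : ℝ≥0 ≃ₜ ℝ≥0, g 0 = 0 ∧
    Tendsto (fun t : ℝ≥0 => dist (π x t) (π p (g t))) atTop (𝓝 0)

/-- The sequence `t 0, s 0, t 1, s 1, …`. -/
def interleave (t s : ℕ → ℝ≥0) (n : ℕ) : ℝ≥0 :=
  if n % 2 = 0 then t (n / 2) else s (n / 2)

lemma tendsto_interleave_s10 {F : Filter ℝ≥0} {t s : ℕ → ℝ≥0}
    (ht : Tendsto t atTop F) (hs : Tendsto s atTop F) :
    Tendsto (interleave t s) atTop F := by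
  have hdiv : Tendsto (fun n : ℕ => n / 2) atTop atTop :=
    Nat.tendsto_div_const_atTop (by norm_num)
  intro U hU
  rw [mem_map]
  filter_upwards [(ht.comp hdiv) hU, (hs.comp hdiv) hU] with n h1 h2
  simp only [Set.mem_preimage, interleave, Function.comp_apply] at *
  split_ifs <;> assumption

/-- If `f` converges along every sequence tending to `F`, then all these limits agree. -/
lemma exists_limit_value {Y : Type*} [MetricSpace Y] (f : ℝ≥0 → Y) (F : Filter ℝ≥0)
    (hf : ∀ t : ℕ → ℝ≥0, Tendsto t atTop F → ∃ q, Tendsto (fun n => f (t n)) atTop (𝓝 q))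
    (hne : ∃ t : ℕ → ℝ≥0, Tendsto t atTop F) :
    ∃ q, ∀ t : ℕ → ℝ≥0, Tendsto t atTop F → Tendsto (fun n => f (t n)) atTop (𝓝 q) := by
  obtain ⟨t, ht⟩ := hne
  obtain ⟨q, hq⟩ := hf t ht
  refine ⟨q, fun s hs => ?_⟩
  obtain ⟨l, hl⟩ := hf _ (tendsto_interleave_s10 ht hs)
  have he : Tendsto (fun n : ℕ => 2 * n) atTop atTop :=
    tendsto_id.const_mul_atTop' (by norm_num)
  have ho : Tendsto (fun n : ℕ => 2 * n + 1) atTop atTop :=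
    tendsto_atTop_mono (fun n => Nat.le_succ _) he
  have h1 : Tendsto (fun n => f (t n)) atTop (𝓝 l) := by
    refine (hl.comp he).congr fun n => ?_
    simp [interleave]
  have h2 : Tendsto (fun n => f (s n)) atTop (𝓝 l) := by
    refine (hl.comp ho).congr fun n => ?_
    have e1 : (2 * n + 1) % 2 = 1 := by omega
    have e2 : (2 * n + 1) / 2 = n := by omega
    simp [interleave, e1, e2]
  rwa [tendsto_nhds_unique hq h1]

/-- The filter of large times `t` at which `π x t` is close to `q`. -/
def approachFilter {X : Type*} [MetricSpace X] (π : X → ℝ≥0 → X) (x q : X) : Filter ℝ≥0 :=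
  atTop ⊓ comap (π x) (𝓝 q)

lemma tendsto_approachFilter {X : Type*} [MetricSpace X] {π : X → ℝ≥0 → X} {x q : X}
    {t : ℕ → ℝ≥0} : Tendsto t atTop (approachFilter π x q) ↔
      Tendsto t atTop atTop ∧ Tendsto (fun n => π x (t n)) atTop (𝓝 q) := by
  simp only [approachFilter, tendsto_inf, tendsto_comap_iff]
  rfl

theorem stmt_10 {X Y : Type*} [MetricSpace X] [MetricSpace Y]
    (π : X → ℝ≥0 → X) (σ : Y → ℝ≥0 → Y) (hπ : IsSDS π) (hσ : IsSDS σ)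
    (x : X) (y : Y) (hx : AsympAP π x)
    (hcomp : ∀ t : ℕ → ℝ≥0, Tendsto t atTop atTop →
      (∃ p : X, Tendsto (fun n => π x (t n)) atTop (𝓝 p)) →
      ∃ q : Y, Tendsto (fun n => σ y (t n)) atTop (𝓝 q)) :
    ∃ h : X → Y, ContinuousOn h (limitSet π x) ∧
      Set.MapsTo h (limitSet π x) (limitSet σ y) ∧
      (∀ q ∈ limitSet π x, ∀ t : ℕ → ℝ≥0, Tendsto t atTop atTop →
        Tendsto (fun n => π x (t n)) atTop (𝓝 q) →
        Tendsto (fun n => σ y (t n)) atTop (𝓝 (h q))) ∧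
      (∀ q ∈ limitSet π x, ∀ s : ℝ≥0, h (π q s) = σ (h q) s) ∧
      (∀ q' ∈ Pset π x, ∀ g : ℝ≥0 ≃ₜ ℝ≥0, g 0 = 0 →
        Tendsto (fun t : ℝ≥0 => dist (π x t) (π q' (g t))) atTop (𝓝 0) →
        ∀ t : ℕ → ℝ≥0, Tendsto t atTop atTop →
          (∃ p : X, Tendsto (fun n => π x (t n)) atTop (𝓝 p)) →
          Tendsto (fun n => dist (σ y (t n)) (σ (h q') (g (t n)))) atTop (𝓝 0)) := by
  obtain ⟨hπc, -, hπa⟩ := hπ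
  obtain ⟨hσc, -, hσa⟩ := hσ
  have key : ∀ q ∈ limitSet π x, ∃ l, ∀ t : ℕ → ℝ≥0, Tendsto t atTop (approachFilter π x q) →
      Tendsto (fun n => σ y (t n)) atTop (𝓝 l) := by
    rintro q ⟨t, ht, htq⟩
    refine exists_limit_value (σ y) _ (fun s hs => ?_) ⟨t, tendsto_approachFilter.2 ⟨ht, htq⟩⟩
    obtain ⟨hs1, hs2⟩ := tendsto_approachFilter.1 hs
    exact hcomp s hs1 ⟨q, hs2⟩
  have : Nonempty Y := ⟨y⟩
  choose! h hh using key
  have ha : ∀ q ∈ limitSet π x, ∀ t : ℕ → ℝ≥0, Tendsto t atTop atTop →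
      Tendsto (fun n => π x (t n)) atTop (𝓝 q) →
      Tendsto (fun n => σ y (t n)) atTop (𝓝 (h q)) :=
    fun q hq t ht htq => hh q hq t (tendsto_approachFilter.2 ⟨ht, htq⟩)
  have hfil : ∀ q ∈ limitSet π x, Tendsto (σ y) (approachFilter π x q) (𝓝 (h q)) := by
    intro q hq
    have : (approachFilter π x q).IsCountablyGenerated := by
      unfold approachFilter; infer_instance
    exact tendsto_of_seq_tendsto fun t ht => hh q hq t ht
  have hshift : ∀ q, ∀ t : ℕ → ℝ≥0, ∀ s : ℝ≥0, Tendsto t atTop atTop →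
      Tendsto (fun n => π x (t n)) atTop (𝓝 q) →
      Tendsto (fun n => t n + s) atTop atTop ∧
        Tendsto (fun n => π x (t n + s)) atTop (𝓝 (π q s)) := by
    intro q t s ht htq
    refine ⟨tendsto_atTop_mono (fun n => le_self_add) ht, ?_⟩
    have hc : Continuous fun z => π z s := hπc.comp (continuous_id.prodMk continuous_const)
    exact ((hc.tendsto q).comp htq).congr fun n => hπa x (t n) s
  have hinv : ∀ q ∈ limitSet π x, ∀ s : ℝ≥0, π q s ∈ limitSet π x := by
    rintro q ⟨t, ht, htq⟩ s
    exact ⟨_, hshift q t s ht htq⟩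
  have hcont : ContinuousOn h (limitSet π x) := by
    intro q hq
    rw [ContinuousWithinAt, (closed_nhds_basis (h q)).tendsto_right_iff]
    rintro V ⟨hV, hVc⟩
    -- a large-time set `S` and a neighbourhood `U` of `q` with `σ y t ∈ V` when `t ∈ S`, `π x t ∈ U`
    obtain ⟨S, hS, W, ⟨U, hU, hUW⟩, hSW⟩ := mem_inf_iff.1 (hfil q hq hV)
    filter_upwards [mem_nhdsWithin_of_mem_nhds (eventually_mem_nhds_iff.2 hU),
      self_mem_nhdsWithin] with q' hq'U hq'
    have hq'2 := hq'
    obtain ⟨t, ht, htq⟩ := hq'2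
    refine hVc.mem_of_tendsto (ha q' hq' t ht htq) ?_
    filter_upwards [ht hS, htq hq'U] with n h1 h2
    have : t n ∈ σ y ⁻¹' V := by
      rw [hSW]
      exact ⟨h1, hUW h2⟩
    exact this
  have hb : ∀ q ∈ limitSet π x, ∀ s : ℝ≥0, h (π q s) = σ (h q) s := by
    intro q hq s
    have hq2 := hq
    obtain ⟨t, ht, htq⟩ := hq2
    obtain ⟨h1, h2⟩ := hshift q t s ht htq
    have hc : Continuous fun z => σ z s := hσc.comp (continuous_id.prodMk continuous_const)
    refine tendsto_nhds_unique (ha _ (hinv q hq s) _ h1 h2) ?_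
    exact ((hc.tendsto (h q)).comp (ha q hq t ht htq)).congr fun n => hσa y (t n) s
  refine ⟨h, hcont, ?_, ha, hb, ?_⟩
  · intro q hq
    have hq2 := hq
    obtain ⟨t, ht, htq⟩ := hq2
    exact ⟨t, ht, ha q hq t ht htq⟩
  · rintro q' ⟨hq', -⟩ g - hg t ht ⟨p, hp⟩
    have hpL : p ∈ limitSet π x := ⟨t, ht, hp⟩
    have h1 : Tendsto (fun n => π q' (g (t n))) atTop (𝓝 p) :=
      hp.congr_dist (hg.comp ht)
    have h2 : Tendsto (fun n => h (π q' (g (t n)))) atTop (𝓝 (h p)) :=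
      (hcont p hpL).tendsto.comp
        (tendsto_nhdsWithin_iff.2 ⟨h1, Eventually.of_forall fun n => hinv q' hq' _⟩)
    have h3 := (ha p hpL t ht hp).dist (h2.congr fun n => hb q' hq' _)
    rwa [dist_self] at h3
end
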